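/- arXiv:2509.10388 — 6 statements merged into one kernel-verified Lean document; each statement's English description precedes it below -/
import Mathlib

section
/- Let g > 0 be a gain factor, and for two scene points i and j let ρ_i, ρ_j ∈ (0,1) be albedos and η_i, η_j > 0 be shading values, with visible intensities I_v,i = g·ρ_i·η_i and I_v,j = g·ρ_j·η_j and heat source intensities S_i = (1−ρ_i)·η_i and S_j = (1−ρ_j)·η_j. If S_i > S_j and I_v,i < I_v,j, then ρ_i < ρ_j. -/
theorem albedo_ordinal_pos
    (g ρi ρj ηi ηj Ivi Ivj Si Sj : ℝ)
    (hg : 0 < g)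
    (hρi : ρi ∈ Set.Ioo (0 : ℝ) 1) (hρj : ρj ∈ Set.Ioo (0 : ℝ) 1)
    (hηi : 0 < ηi) (hηj : 0 < ηj)
    (hIvi : Ivi = g * ρi * ηi) (hIvj : Ivj = g * ρj * ηj)
    (hSi : Si = (1 - ρi) * ηi) (hSj : Sj = (1 - ρj) * ηj)
    (hS : Si > Sj) (hIv : Ivi < Ivj) :
    ρi < ρj := by
  subst hIvi hIvj hSi hSj
  obtain ⟨hi0, hi1⟩ := hρi
  obtain ⟨hj0, hj1⟩ := hρj
  by_contra hcon
  have h : ρj ≤ ρi := not_lt.mp hcon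
  have h1 : ρi * ηi < ρj * ηj := by
    rw [mul_assoc, mul_assoc] at hIv
    exact lt_of_mul_lt_mul_left hIv hg.le
  have h2 : ηi < ηj :=
    lt_of_mul_lt_mul_left (h1.trans_le (mul_le_mul_of_nonneg_right h hηj.le)) hi0.le
  have h3 : (1 - ρi) * ηi ≤ (1 - ρj) * ηi :=
    mul_le_mul_of_nonneg_right (by linarith) hηi.le
  have h4 : ηj < ηi :=
    lt_of_mul_lt_mul_left (lt_of_lt_of_le hS h3) (by linarith)
  exact lt_asymm h2 h4
end

section
/- Let g > 0 be a gain factor, and for two scene points i and j let ρ_i, ρ_j ∈ (0,1) be albedos and η_i, η_j > 0 be shading values, with visible intensities I_v,i = g·ρ_i·η_i and I_v,j = g·ρ_j·η_j and heat source intensities S_i = (1−ρ_i)·η_i and S_j = (1−ρ_j)·η_j. If S_i < S_j and I_v,i > I_v,j, then ρ_i > ρ_j. -/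
theorem albedo_ordinal_neg
    (g ρi ρj ηi ηj Ivi Ivj Si Sj : ℝ)
    (hg : 0 < g)
    (hρi : ρi ∈ Set.Ioo (0 : ℝ) 1) (hρj : ρj ∈ Set.Ioo (0 : ℝ) 1)
    (hηi : 0 < ηi) (hηj : 0 < ηj)
    (hIvi : Ivi = g * ρi * ηi) (hIvj : Ivj = g * ρj * ηj)
    (hSi : Si = (1 - ρi) * ηi) (hSj : Sj = (1 - ρj) * ηj)
    (hS : Si < Sj) (hIv : Ivi > Ivj) :
    ρi > ρj := by
  obtain ⟨hi0, hi1⟩ := hρi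
  obtain ⟨hj0, hj1⟩ := hρj
  subst hIvi hIvj hSi hSj
  by_contra hcon
  have hle : ρi ≤ ρj := not_lt.mp hcon
  have h1 : ρj * ηj < ρi * ηi := by
    have h : g * (ρj * ηj) < g * (ρi * ηi) := by
      rw [← mul_assoc, ← mul_assoc]
      exact hIv
    exact lt_of_mul_lt_mul_left h hg.le
  have h2 : ρi * ηi ≤ ρj * ηi := mul_le_mul_of_nonneg_right hle hηi.le
  have h3 : ηj < ηi := lt_of_mul_lt_mul_left (h1.trans_le h2) hj0.le
  have h4 : (1 - ρj) * ηj < (1 - ρj) * ηi := mul_lt_mul_of_pos_left h3 (by linarith)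
  have h5 : (1 - ρj) * ηi ≤ (1 - ρi) * ηi :=
    mul_le_mul_of_nonneg_right (by linarith) hηi.le
  linarith
end

section
/- Let g > 0 and β > 1, and for two scene points i and j let ρ_i, ρ_j ∈ (0,1) be albedos and η_i, η_j > 0 be shading values, with visible intensities I_v,i = g·ρ_i·η_i and I_v,j = g·ρ_j·η_j and heat source intensities S_i = (β−ρ_i)·η_i and S_j = (β−ρ_j)·η_j. If S_i > S_j and I_v,i < I_v,j, then ρ_i < ρ_j; and if S_i < S_j and I_v,i > I_v,j, then ρ_i > ρ_j. -/
theorem albedo_aux (g β a b x y : ℝ) (hg : 0 < g) (hβ : 1 < β) (ha : 0 < a) (ha1 : a < 1)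
    (hy : 0 < y) (h1 : (β - b) * y < (β - a) * x) (h2 : g * a * x < g * b * y) : a < b := by
  by_contra hab
  have hab : b ≤ a := not_lt.mp hab
  have h3 : a * x < b * y := by
    rw [mul_assoc, mul_assoc] at h2
    exact lt_of_mul_lt_mul_left h2 hg.le
  have h4 : b * y ≤ a * y := mul_le_mul_of_nonneg_right hab hy.le
  have h5 : x < y := lt_of_mul_lt_mul_left (h3.trans_le h4) ha.le
  have h6 : (β - a) * x < (β - a) * y := mul_lt_mul_of_pos_left h5 (by linarith)
  linarith

theorem albedo_ordinal_beta
    (g β ρi ρj ηi ηj Ivi Ivj Si Sj : ℝ)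
    (hg : 0 < g) (hβ : 1 < β)
    (hρi : ρi ∈ Set.Ioo (0 : ℝ) 1) (hρj : ρj ∈ Set.Ioo (0 : ℝ) 1)
    (hηi : 0 < ηi) (hηj : 0 < ηj)
    (hIvi : Ivi = g * ρi * ηi) (hIvj : Ivj = g * ρj * ηj)
    (hSi : Si = (β - ρi) * ηi) (hSj : Sj = (β - ρj) * ηj) :
    (Si > Sj → Ivi < Ivj → ρi < ρj) ∧ (Si < Sj → Ivi > Ivj → ρi > ρj) := by
  subst hIvi hIvj hSi hSj
  exact ⟨fun h1 h2 => albedo_aux g β ρi ρj ηi ηj hg hβ hρi.1 hρi.2 hηj h1 h2,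
    fun h1 h2 => albedo_aux g β ρj ρi ηj ηi hg hβ hρj.1 hρj.2 hηi h1 h2⟩
end

section
/- Let ρ, η : ℝ → ℝ be functions differentiable at a point x with ρ(x) ∈ (0,1) and η(x) > 0, let g > 0 and β > 1 be constants, and define I_v = g·ρ·η and S = (β−ρ)·η. If η′(x) = 0 and ρ′(x) ≠ 0, then I_v′(x)·S′(x) < 0. -/
theorem albedo_edge_opposite_signs_beta
    (ρ η : ℝ → ℝ) (x g β : ℝ)
    (hρ : DifferentiableAt ℝ ρ x) (hη : DifferentiableAt ℝ η x)
    (hρx : ρ x ∈ Set.Ioo (0 : ℝ) 1) (hηx : 0 < η x)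
    (hg : 0 < g) (hβ : 1 < β)
    (hη' : deriv η x = 0) (hρ' : deriv ρ x ≠ 0) :
    deriv (fun y => g * ρ y * η y) x * deriv (fun y => (β - ρ y) * η y) x < 0 := by
  have h1 := ((hρ.hasDerivAt.const_mul g).mul hη.hasDerivAt).deriv
  have h2 := ((hρ.hasDerivAt.const_sub β).mul hη.hasDerivAt).deriv
  have e1 : deriv (fun y => g * ρ y * η y) x = g * deriv ρ x * η x := by
    refine Eq.trans h1 ?_
    rw [hη']; ring
  have e2 : deriv (fun y => (β - ρ y) * η y) x = -deriv ρ x * η x := by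
    refine Eq.trans h2 ?_
    rw [hη']; ring
  rw [e1, e2]
  have h3 : 0 < g * (deriv ρ x) ^ 2 * (η x) ^ 2 := by positivity
  linarith [h3, show g * deriv ρ x * η x * (-deriv ρ x * η x) = -(g * (deriv ρ x) ^ 2 * (η x) ^ 2) by ring]
end

section
/- Let ρ, η, I_t : ℝ → ℝ be functions differentiable at a point x with ρ(x) ∈ (0,1) and η(x) > 0, let g > 0 and c_1 > 0 and c_3 ∈ ℝ be constants, and define I_v = g·ρ·η. Suppose (1−ρ(y))·η(y) = c_1·I_t(y) − c_3 for all y in a neighborhood of x. If η′(x) = 0 and ρ′(x) ≠ 0 (an albedo-dominant edge), then I_v′(x)·I_t′(x) < 0. -/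
theorem albedo_edge_thermal
    (ρ η It : ℝ → ℝ) (x g c₁ c₃ : ℝ)
    (hρ : DifferentiableAt ℝ ρ x) (hη : DifferentiableAt ℝ η x)
    (hIt : DifferentiableAt ℝ It x)
    (hρx : ρ x ∈ Set.Ioo (0 : ℝ) 1) (hηx : 0 < η x)
    (hg : 0 < g) (hc₁ : 0 < c₁)
    (hrel : ∀ᶠ y in nhds x, (1 - ρ y) * η y = c₁ * It y - c₃)
    (hη' : deriv η x = 0) (hρ' : deriv ρ x ≠ 0) :
    deriv (fun y => g * ρ y * η y) x * deriv It x < 0 := by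
  have h1 := hρ.hasDerivAt
  have h2 := hη.hasDerivAt
  have h3 := hIt.hasDerivAt
  have hv : deriv (fun y => g * ρ y * η y) x = g * deriv ρ x * η x + g * ρ x * deriv η x :=
    ((h1.const_mul g).mul h2).deriv
  have hl : deriv (fun y => (1 - ρ y) * η y) x = (-deriv ρ x) * η x + (1 - ρ x) * deriv η x :=
    ((h1.const_sub 1).mul h2).deriv
  have hr : deriv (fun y => c₁ * It y - c₃) x = c₁ * deriv It x :=
    ((h3.const_mul c₁).sub_const c₃).deriv
  have he : deriv (fun y => (1 - ρ y) * η y) x = deriv (fun y => c₁ * It y - c₃) x :=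
    Filter.EventuallyEq.deriv_eq hrel
  rw [hl, hr, hη'] at he
  have hI : deriv It x = -(deriv ρ x * η x) / c₁ := by
    rw [eq_div_iff hc₁.ne']
    linarith
  rw [hv, hη', hI]
  have hp : 0 < g * (deriv ρ x * η x) ^ 2 / c₁ := by
    have := mul_ne_zero hρ' hηx.ne'
    positivity
  have hk : (g * deriv ρ x * η x + g * ρ x * 0) * (-(deriv ρ x * η x) / c₁)
      = -(g * (deriv ρ x * η x) ^ 2 / c₁) := by ring
  rw [hk]
  linarith
end

section
/- Let ρ, η, I_t : ℝ → ℝ be functions differentiable at a point x with ρ(x) ∈ (0,1) and η(x) > 0, let g > 0 and c_1 > 0 and c_3 ∈ ℝ be constants, and define I_v = g·ρ·η. Suppose (1−ρ(y))·η(y) = c_1·I_t(y) − c_3 for all y in a neighborhood of x. If ρ′(x) = 0 and η′(x) ≠ 0 (a shading-dominant edge), then I_v′(x)·I_t′(x) > 0. -/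
theorem shading_edge_thermal
    (ρ η It : ℝ → ℝ) (x g c₁ c₃ : ℝ)
    (hρ : DifferentiableAt ℝ ρ x) (hη : DifferentiableAt ℝ η x)
    (hIt : DifferentiableAt ℝ It x)
    (hρx : ρ x ∈ Set.Ioo (0 : ℝ) 1) (hηx : 0 < η x)
    (hg : 0 < g) (hc₁ : 0 < c₁)
    (hrel : ∀ᶠ y in nhds x, (1 - ρ y) * η y = c₁ * It y - c₃)
    (hρ' : deriv ρ x = 0) (hη' : deriv η x ≠ 0) :
    deriv (fun y => g * ρ y * η y) x * deriv It x > 0 := by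
  obtain ⟨h0, h1⟩ := hρx
  have dρ : HasDerivAt ρ 0 x := hρ' ▸ hρ.hasDerivAt
  have dη := hη.hasDerivAt
  have dI := hIt.hasDerivAt
  have hv : HasDerivAt (fun y => g * ρ y * η y) (g * 0 * η x + g * ρ x * deriv η x) x :=
    (dρ.const_mul g).mul dη
  have hl : HasDerivAt (fun y => (1 - ρ y) * η y) (-0 * η x + (1 - ρ x) * deriv η x) x :=
    (dρ.const_sub 1).mul dη
  have hr : HasDerivAt (fun y => c₁ * It y - c₃) (c₁ * deriv It x) x :=
    (dI.const_mul c₁).sub_const c₃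
  have he : -0 * η x + (1 - ρ x) * deriv η x = c₁ * deriv It x :=
    hl.unique (hr.congr_of_eventuallyEq hrel)
  have hI : deriv It x = (1 - ρ x) * deriv η x / c₁ := by
    rw [eq_div_iff hc₁.ne']
    linarith
  have h2 : 0 < 1 - ρ x := by linarith
  have h3 : 0 < deriv η x ^ 2 := by positivity
  have h4 : 0 < g * ρ x * (1 - ρ x) / c₁ * deriv η x ^ 2 := by positivity
  rw [hv.deriv, hI]
  calc _ = g * ρ x * (1 - ρ x) / c₁ * deriv η x ^ 2 := by ring
    _ > 0 := h4
end
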